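/- Let ν > 0 be real, λ ∈ ℂ, and define u(t) = E_{ν,1}(−λ t^ν) for t ≥ 0. Then for every t ≥ 0, u satisfies the Volterra integral equation u(t) = 1 − (λ/Γ(ν)) ∫₀^t (t−τ)^{ν−1} u(τ) dτ; that is, u(t) = 1 − λ · (₀D_t^{−ν} u)(t), where ₀D_t^{−ν} is the Riemann–Liouville fractional integral of order ν. -/

import Mathlib

open scoped Real
open MeasureTheory

/-- Generalized Mittag-Leffler function `E_{α,γ}(z) = ∑ zⁿ / Γ(αn + γ)`. -/
noncomputable def mittagLeffler (α γ : ℝ) (z : ℂ) : ℂ :=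
  ∑' n : ℕ, z ^ n / (Real.Gamma (α * n + γ) : ℂ)

/-!
The fractional integral of order `ν` sends `t ^ (p - 1) / Γ(p)` to `t ^ (p + ν - 1) / Γ(p + ν)`, by
the Beta integral. Applied term by term, it sends `t ^ (γ - 1) E_{α,γ}(z t ^ α)` to
`t ^ (γ + ν - 1) E_{α,γ+ν}(z t ^ α)`. For `α = ν` the series on the right is the one on the left
shifted by one index, as `E_{ν,γ}(w) = 1 / Γ(γ) + w E_{ν,γ+ν}(w)`, and taking `z = -λ` gives the
Volterra equation.
-/

open Set Filter

/-- The Riemann–Liouville fractional integral `₀D_t^{-ν} f` of order `ν`, with base point `0`. -/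
noncomputable def riemannLiouvilleIntegral {E : Type*} [NormedAddCommGroup E] [NormedSpace ℝ E]
    (ν : ℝ) (f : ℝ → E) (t : ℝ) : E :=
  (Real.Gamma ν)⁻¹ • ∫ τ in (0 : ℝ)..t, (t - τ) ^ (ν - 1) • f τ

section BetaKernel

variable {p ν t : ℝ}

theorem integral_sub_rpow_mul_rpow (hp : 0 < p) (hν : 0 < ν) (ht : 0 < t) :
    ∫ τ in (0 : ℝ)..t, (t - τ) ^ (ν - 1) * τ ^ (p - 1) =
      Real.Gamma ν * (t ^ (p + ν - 1) * (Real.Gamma p / Real.Gamma (p + ν))) := by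
  have h_integrand : ∀ τ ∈ uIcc 0 t, (((t - τ) ^ (ν - 1) * τ ^ (p - 1) : ℝ) : ℂ) =
      (τ : ℂ) ^ ((p : ℂ) - 1) * ((t : ℂ) - τ) ^ ((ν : ℂ) - 1) := by
    intro τ hτ
    rw [uIcc_of_le ht.le] at hτ
    rw [Complex.ofReal_mul, Complex.ofReal_cpow (sub_nonneg.2 hτ.2), Complex.ofReal_cpow hτ.1,
      mul_comm]
    push_cast
    rfl
  apply Complex.ofReal_injective
  rw [← intervalIntegral.integral_ofReal, intervalIntegral.integral_congr h_integrand,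
    Complex.betaIntegral_scaled _ _ ht,
    Complex.betaIntegral_eq_Gamma_mul_div _ _ (by simpa using hp) (by simpa using hν)]
  push_cast [Complex.ofReal_cpow ht.le, ← Complex.Gamma_ofReal]
  ring

theorem integrableOn_sub_rpow_mul_rpow (hp : 0 < p) (hν : 0 < ν) (ht : 0 < t) :
    IntegrableOn (fun τ ↦ (t - τ) ^ (ν - 1) * τ ^ (p - 1)) (Ioc 0 t) := by
  rw [← intervalIntegrable_iff_integrableOn_Ioc_of_le ht.le]
  -- The Bochner integral of a non-integrable function is `0`, whereas this one is positive.
  apply intervalIntegral.intervalIntegrable_of_integral_ne_zero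
  rw [integral_sub_rpow_mul_rpow hp hν ht]
  have := Real.Gamma_pos_of_pos hp
  have := Real.Gamma_pos_of_pos hν
  have := Real.Gamma_pos_of_pos (add_pos hp hν)
  positivity

end BetaKernel

section FractionalIntegral

variable {E : Type*} [NormedAddCommGroup E] [NormedSpace ℝ E] {ν t : ℝ}

theorem riemannLiouvilleIntegral_congr {f g : ℝ → E} (ht : 0 ≤ t) (h : EqOn f g (Ioc 0 t)) :
    riemannLiouvilleIntegral ν f t = riemannLiouvilleIntegral ν g t := by
  simp only [riemannLiouvilleIntegral, intervalIntegral.integral_of_le ht]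
  congr 1
  exact setIntegral_congr_fun measurableSet_Ioc fun τ hτ ↦ congrArg _ (h hτ)

theorem hasSum_riemannLiouvilleIntegral_rpow_smul [CompleteSpace E] {ι : Type*} [Countable ι]
    {p : ι → ℝ} {c : ι → E} (hν : 0 < ν) (ht : 0 < t) (hp : ∀ i, 0 < p i)
    (hc : Summable fun i ↦ t ^ (p i + ν - 1) * (Real.Gamma (p i) / Real.Gamma (p i + ν)) * ‖c i‖) :
    HasSum (fun i ↦ (t ^ (p i + ν - 1) * (Real.Gamma (p i) / Real.Gamma (p i + ν))) • c i)
      (riemannLiouvilleIntegral ν (fun τ ↦ ∑' i, τ ^ (p i - 1) • c i) t) := by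
  set K : ι → ℝ → ℝ := fun i τ ↦ (t - τ) ^ (ν - 1) * τ ^ (p i - 1)
  have integral_K (i : ι) : ∫ τ in Ioc 0 t, K i τ =
      Real.Gamma ν * (t ^ (p i + ν - 1) * (Real.Gamma (p i) / Real.Gamma (p i + ν))) := by
    rw [← intervalIntegral.integral_of_le ht.le, integral_sub_rpow_mul_rpow (hp i) hν ht]
  have integral_norm (i : ι) : ∫ τ in Ioc 0 t, ‖K i τ • c i‖ = Real.Gamma ν *
      (t ^ (p i + ν - 1) * (Real.Gamma (p i) / Real.Gamma (p i + ν)) * ‖c i‖) := by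
    have norm_eq : EqOn (fun τ ↦ ‖K i τ • c i‖) (fun τ ↦ K i τ * ‖c i‖) (Ioc 0 t) := by
      intro τ hτ
      have K_nonneg : 0 ≤ K i τ :=
        mul_nonneg (Real.rpow_nonneg (sub_nonneg.2 hτ.2) _) (Real.rpow_nonneg hτ.1.le _)
      simp only [norm_smul, Real.norm_of_nonneg K_nonneg]
    rw [setIntegral_congr_fun measurableSet_Ioc norm_eq, integral_mul_const, integral_K, mul_assoc]
  have integrable_term (i : ι) : IntegrableOn (fun τ ↦ K i τ • c i) (Ioc 0 t) :=
    (integrableOn_sub_rpow_mul_rpow (hp i) hν ht).smul_const (c i)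
  have h_swap := (hasSum_integral_of_summable_integral_norm integrable_term
    ((hc.mul_left _).congr fun i ↦ (integral_norm i).symm)).const_smul (Real.Gamma ν)⁻¹
  have Gamma_ne_zero := (Real.Gamma_pos_of_pos hν).ne'
  convert! h_swap using 1
  · ext i
    rw [integral_smul_const, integral_K, smul_smul, inv_mul_cancel_left₀ Gamma_ne_zero]
  · simp only [riemannLiouvilleIntegral, intervalIntegral.integral_of_le ht.le,
      ← tsum_const_smul'', smul_smul, K]

end FractionalIntegral

section MittagLeffler

variable {α γ ν t : ℝ}

theorem rpow_mul_exp_neg_le_Gamma {a x : ℝ} (ha : 0 ≤ a) (hx : 1 ≤ x) :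
    a ^ (x - 1) * Real.exp (-a) ≤ Real.Gamma x := by
  have hx₀ : 0 < x := by linarith
  have h_int := Real.GammaIntegral_convergent hx₀
  have h_sub : Ioi a ⊆ Ioi 0 := Ioi_subset_Ioi ha
  calc a ^ (x - 1) * Real.exp (-a) = ∫ s in Ioi a, Real.exp (-s) * a ^ (x - 1) := by
        rw [integral_mul_const, integral_exp_neg_Ioi, mul_comm]
    _ ≤ ∫ s in Ioi a, Real.exp (-s) * s ^ (x - 1) := by
        refine setIntegral_mono_on ((integrableOn_exp_neg_Ioi a).mul_const _)
          (h_int.mono_set h_sub) measurableSet_Ioi fun s hs ↦ ?_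
        have rpow_le : a ^ (x - 1) ≤ s ^ (x - 1) :=
          Real.rpow_le_rpow ha (mem_Ioi.1 hs).le (sub_nonneg.2 hx)
        gcongr
    _ ≤ ∫ s in Ioi 0, Real.exp (-s) * s ^ (x - 1) := by
        refine setIntegral_mono_set h_int ?_ (Eventually.of_forall h_sub)
        filter_upwards [ae_restrict_mem measurableSet_Ioi] with s hs
        exact mul_nonneg (Real.exp_nonneg _) (Real.rpow_nonneg (mem_Ioi.1 hs).le _)
    _ = Real.Gamma x := (Real.Gamma_eq_integral hx₀).symm

theorem summable_pow_div_Gamma (hα : 0 < α) (γ : ℝ) (z : ℂ) :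
    Summable fun n : ℕ ↦ z ^ n / (Real.Gamma (α * n + γ) : ℂ) := by
  -- With `a ^ α = ‖z‖ + 1`, the bound `Γ(x) ≥ a ^ (x - 1) e ^ (-a)` gives a geometric majorant.
  obtain ⟨a, ha, haα⟩ : ∃ a : ℝ, 0 < a ∧ a ^ α = ‖z‖ + 1 :=
    ⟨(‖z‖ + 1) ^ α⁻¹, by positivity, Real.rpow_inv_rpow (by positivity) hα.ne'⟩
  have h_geom : Summable fun n : ℕ ↦
      (a ^ (γ - 1) * Real.exp (-a))⁻¹ * (‖z‖ / (‖z‖ + 1)) ^ n :=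
    (summable_geometric_of_lt_one (by positivity)
      ((div_lt_one (by positivity)).2 (lt_add_one _))).mul_left _
  have h_arg : Tendsto (fun n : ℕ ↦ α * n + γ) atTop atTop :=
    tendsto_atTop_add_const_right _ _ (tendsto_natCast_atTop_atTop.const_mul_atTop hα)
  refine h_geom.of_norm_bounded_eventually_nat ?_
  filter_upwards [h_arg.eventually_ge_atTop 1] with n hn
  have Gamma_pos : 0 < Real.Gamma (α * n + γ) := Real.Gamma_pos_of_pos (by linarith)
  have h_pow : a ^ (α * n + γ - 1) = (‖z‖ + 1) ^ n * a ^ (γ - 1) := by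
    rw [add_sub_assoc, Real.rpow_add ha, Real.rpow_mul_natCast ha.le, haα]
  calc ‖z ^ n / (Real.Gamma (α * n + γ) : ℂ)‖ = ‖z‖ ^ n / Real.Gamma (α * n + γ) := by
        rw [norm_div, norm_pow, Complex.norm_real, Real.norm_of_nonneg Gamma_pos.le]
    _ ≤ ‖z‖ ^ n / (a ^ (α * n + γ - 1) * Real.exp (-a)) := by
        gcongr
        exact rpow_mul_exp_neg_le_Gamma ha.le hn
    _ = (a ^ (γ - 1) * Real.exp (-a))⁻¹ * (‖z‖ / (‖z‖ + 1)) ^ n := by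
        rw [h_pow, div_pow]
        field_simp

theorem mittagLeffler_zero (α γ : ℝ) : mittagLeffler α γ 0 = (Real.Gamma γ : ℂ)⁻¹ := by
  rw [mittagLeffler, tsum_eq_single 0 (by simp +contextual)]
  simp

theorem mittagLeffler_eq_inv_Gamma_add_mul (hα : 0 < α) (γ : ℝ) (z : ℂ) :
    mittagLeffler α γ z = (Real.Gamma γ : ℂ)⁻¹ + z * mittagLeffler α (γ + α) z := by
  rw [mittagLeffler, (summable_pow_div_Gamma hα γ z).tsum_eq_zero_add, mittagLeffler,
    ← tsum_mul_left]
  congr 1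
  · simp
  · congr 1 with n
    rw [pow_succ', mul_div_assoc]
    push_cast
    ring_nf

theorem rpow_smul_mittagLeffler_term (ht : 0 < t) (α γ : ℝ) (z : ℂ) (n : ℕ) :
    t ^ (γ - 1) • ((z * ((t ^ α : ℝ) : ℂ)) ^ n / (Real.Gamma (α * n + γ) : ℂ)) =
      t ^ (α * n + γ - 1) • (z ^ n / (Real.Gamma (α * n + γ) : ℂ)) := by
  rw [add_sub_assoc, Real.rpow_add ht, Real.rpow_mul_natCast ht.le, Complex.real_smul,
    Complex.real_smul]
  push_cast
  ring

theorem hasSum_rpow_smul_mittagLeffler (hα : 0 < α) (ht : 0 < t) (γ : ℝ) (z : ℂ) :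
    HasSum (fun n : ℕ ↦ t ^ (α * n + γ - 1) • (z ^ n / (Real.Gamma (α * n + γ) : ℂ)))
      (t ^ (γ - 1) • mittagLeffler α γ (z * ((t ^ α : ℝ) : ℂ))) := by
  simp only [← rpow_smul_mittagLeffler_term ht]
  exact (summable_pow_div_Gamma hα γ _).hasSum.const_smul _

theorem riemannLiouvilleIntegral_rpow_smul_mittagLeffler (hα : 0 < α) (hγ : 0 < γ) (hν : 0 < ν)
    (ht : 0 < t) (z : ℂ) :
    riemannLiouvilleIntegral ν
        (fun τ ↦ τ ^ (γ - 1) • mittagLeffler α γ (z * ((τ ^ α : ℝ) : ℂ))) t =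
      t ^ (γ + ν - 1) • mittagLeffler α (γ + ν) (z * ((t ^ α : ℝ) : ℂ)) := by
  have arg_pos (n : ℕ) : 0 < α * n + γ := by positivity
  have term_eq (n : ℕ) :
      (t ^ (α * n + γ + ν - 1) * (Real.Gamma (α * n + γ) / Real.Gamma (α * n + γ + ν))) •
          (z ^ n / (Real.Gamma (α * n + γ) : ℂ)) =
        t ^ (α * n + (γ + ν) - 1) • (z ^ n / (Real.Gamma (α * n + (γ + ν)) : ℂ)) := by
    have Gamma_ne_zero : (Real.Gamma (α * n + γ) : ℂ) ≠ 0 :=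
      Complex.ofReal_ne_zero.2 (Real.Gamma_pos_of_pos (arg_pos n)).ne'
    rw [← add_assoc, Complex.real_smul, Complex.real_smul]
    push_cast
    field_simp
  have h_target := hasSum_rpow_smul_mittagLeffler hα ht (γ + ν) z
  have h_norm : Summable fun n : ℕ ↦
      t ^ (α * n + γ + ν - 1) * (Real.Gamma (α * n + γ) / Real.Gamma (α * n + γ + ν)) *
        ‖z ^ n / (Real.Gamma (α * n + γ) : ℂ)‖ := by
    refine h_target.summable.norm.congr fun n ↦ ?_
    have := Real.Gamma_pos_of_pos (arg_pos n)
    have := Real.Gamma_pos_of_pos (add_pos (arg_pos n) hν)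
    rw [← term_eq, norm_smul, Real.norm_of_nonneg (by positivity)]
  have h_integral := hasSum_riemannLiouvilleIntegral_rpow_smul hν ht arg_pos h_norm
  rw [riemannLiouvilleIntegral_congr ht.le
    fun τ hτ ↦ (hasSum_rpow_smul_mittagLeffler hα hτ.1 γ z).tsum_eq.symm]
  exact h_integral.unique (by simpa only [term_eq] using h_target)

theorem mittagLeffler_volterra_general (hν : 0 < ν) (hγ : 0 < γ) (ht : 0 < t) (lam : ℂ) :
    t ^ (γ - 1) • mittagLeffler ν γ (-lam * ((t ^ ν : ℝ) : ℂ)) =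
      t ^ (γ - 1) • (Real.Gamma γ : ℂ)⁻¹ - lam * riemannLiouvilleIntegral ν
        (fun τ ↦ τ ^ (γ - 1) • mittagLeffler ν γ (-lam * ((τ ^ ν : ℝ) : ℂ))) t := by
  rw [riemannLiouvilleIntegral_rpow_smul_mittagLeffler hν hγ hν ht,
    mittagLeffler_eq_inv_Gamma_add_mul hν, add_sub_right_comm, Real.rpow_add ht]
  simp only [Complex.real_smul]
  push_cast
  ring

end MittagLeffler

/-- For `ν > 0` and `λ ∈ ℂ`, the function `u(t) = E_{ν,1}(-λ t^ν)` satisfies the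
Volterra integral equation `u(t) = 1 - (λ/Γ(ν)) ∫₀^t (t-τ)^{ν-1} u(τ) dτ`, i.e.
`u = 1 - λ · (₀D_t^{-ν} u)` with the Riemann–Liouville fractional integral. -/
theorem mittagLeffler_volterra (ν : ℝ) (hν : 0 < ν) (lam : ℂ) (u : ℝ → ℂ)
    (hu : ∀ t : ℝ, u t = mittagLeffler ν 1 (-lam * ((t ^ ν : ℝ) : ℂ))) :
    ∀ t ≥ (0 : ℝ), u t =
      1 - lam / (Real.Gamma ν : ℂ) *
        ∫ τ in (0 : ℝ)..t, (((t - τ) ^ (ν - 1) : ℝ) : ℂ) * u τ := by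
  intro t ht
  rcases ht.eq_or_lt with rfl | ht
  · simp [hu, hν.ne', mittagLeffler_zero]
  · simpa [hu, riemannLiouvilleIntegral, div_eq_mul_inv, mul_assoc] using
      mittagLeffler_volterra_general hν one_pos ht lam
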